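/- Let t ∈ {1,…,T}, j ∈ S, and let n ∈ S^(t) satisfy n_ℓ = 1 for some (necessarily unique) ℓ ∈ S_AR. Then the forward quantity satisfies the recursion α^(t)_n(j) = f_t(j, n) · p_{ℓj} · Σ_{m=1}^{t} α^(t−1)_{n − 1 + m·e_ℓ}(ℓ), where n − 1 denotes the vector n minus the all-ones vector and e_ℓ is the ℓ-th standard basis vector of ℕ^k. -/

import Mathlib

open Finset

namespace MRS

/-- Time since the last visit to the regime with value `j` strictly before time `t`;
equals `t + 1` if that regime was never visited before time `t`. -/
def counter {M : ℕ} (r : ℕ → Fin M) (t : ℕ) (j : ℕ) : ℕ :=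
  if h : ((Finset.range t).filter fun τ => (r τ : ℕ) = j).Nonempty then
    t - ((Finset.range t).filter fun τ => (r τ : ℕ) = j).max' h
  else t + 1

/-- Counter vector for the `k` AR(1) regimes (the regimes with values `0, …, k-1`). -/
def nvec {M : ℕ} (k : ℕ) (r : ℕ → Fin M) (t : ℕ) : Fin k → ℕ :=
  fun j => counter r t (j : ℕ)

/-- Extend a finite path to a stream (values beyond the end repeat the last value;
they are never used for counters up to time `t`). -/
def pad {M t : ℕ} (r : Fin (t + 1) → Fin M) : ℕ → Fin M :=
  fun s => r ⟨min s t, Nat.lt_succ_of_le (min_le_right s t)⟩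

/-- The set `S^(t)` of possible counter vectors at time `t`: every entry lies in
`{1, …, t+1}`, at most `min t k` entries differ from `t+1`, and the entries different
from `t+1` are pairwise distinct. -/
def Sset (k t : ℕ) : Finset (Fin k → ℕ) :=
  (Fintype.piFinset fun _ : Fin k => Finset.Icc 1 (t + 1)).filter fun n =>
    (Finset.univ.filter fun j => n j ≠ t + 1).card ≤ min t k ∧
      ∀ i j : Fin k, i ≠ j → n i ≠ t + 1 → n j ≠ t + 1 → n i ≠ n j

/-- Weight of a (partial) path `r = (r_0, …, r_t)`:
`π_{r_0} f_0(r_0) ∏_{s=1}^t p_{r_{s-1} r_s} f_s(r_s, n_s(r))`. -/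
noncomputable def wpath {M : ℕ} (k : ℕ) (pi0 : Fin M → ℝ) (p : Fin M → Fin M → ℝ)
    (f0 : Fin M → ℝ) (f : ℕ → Fin M → (Fin k → ℕ) → ℝ) {t : ℕ}
    (r : Fin (t + 1) → Fin M) : ℝ :=
  pi0 (r 0) * f0 (r 0) *
    ∏ s ∈ Finset.Icc 1 t, p (pad r (s - 1)) (pad r s) * f s (pad r s) (nvec k (pad r) s)

/-- Forward quantity `α^(t)_n(j)`: total weight of partial paths ending in regime `j`
at time `t` with counter vector `n`. -/
noncomputable def alpha {M : ℕ} (k : ℕ) (pi0 : Fin M → ℝ) (p : Fin M → Fin M → ℝ)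
    (f0 : Fin M → ℝ) (f : ℕ → Fin M → (Fin k → ℕ) → ℝ)
    (t : ℕ) (n : Fin k → ℕ) (j : Fin M) : ℝ :=
  ∑ r ∈ Finset.univ.filter
      (fun r : Fin (t + 1) → Fin M => r (Fin.last t) = j ∧ nvec k (pad r) t = n),
    wpath k pi0 p f0 f r

end MRS

/-!
A path up to time `t + 1` is a path `r` up to time `t` followed by a last regime `j`, which
multiplies the weight by `p (r t) j * f (t + 1) j (n_{t+1})`, and the counter vector `n_{t+1}`
does not depend on `j`. Passing from `n_t` to `n_{t+1}` sets the counter of the regime `r t` to `1`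
and raises every other counter by `1`; as counters are positive, `n_{t+1, ℓ} = 1` forces
`r t = ℓ`. The step destroys exactly one piece of information, the old value `m = n_{t, ℓ}`, which
ranges over `{1, …, t + 1}`, and the recursion sums over this lost value.
-/

namespace MRS

section Counter

variable {M : ℕ}

lemma counter_succ (r : ℕ → Fin M) (t j : ℕ) :
    counter r (t + 1) j = if (r t : ℕ) = j then 1 else counter r t j + 1 := by
  unfold counter
  by_cases hj : (r t : ℕ) = j
  · have ht : t ∈ {τ ∈ range (t + 1) | (r τ : ℕ) = j} := by simp [hj]
    have hmax : {τ ∈ range (t + 1) | (r τ : ℕ) = j}.max' ⟨t, ht⟩ = t :=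
      le_antisymm (max'_le _ _ _ fun τ hτ => Nat.lt_succ_iff.1 (mem_range.1 (mem_filter.1 hτ).1))
        (le_max' _ t ht)
    rw [dif_pos ⟨t, ht⟩, hmax, if_pos hj, Nat.add_sub_cancel_left]
  · simp only [range_add_one, filter_insert, if_neg hj]
    split_ifs with hne
    · have hmax := mem_range.1 (mem_filter.1 (max'_mem _ hne)).1
      omega
    · rfl

lemma counter_mem_Icc (r : ℕ → Fin M) (t j : ℕ) : counter r t j ∈ Icc 1 (t + 1) := by
  rw [mem_Icc]
  induction t with
  | zero => simp [counter]
  | succ t ih => rw [counter_succ]; split_ifs <;> omega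

lemma counter_congr {r r' : ℕ → Fin M} {t : ℕ} (h : ∀ s < t, r s = r' s) (j : ℕ) :
    counter r t j = counter r' t j := by
  have hvisits : {τ ∈ range t | (r τ : ℕ) = j} = {τ ∈ range t | (r' τ : ℕ) = j} :=
    filter_congr fun τ hτ => by rw [h τ (mem_range.1 hτ)]
  simp only [counter, hvisits]

variable {k : ℕ}

lemma nvec_succ (r : ℕ → Fin M) (t : ℕ) (i : Fin k) :
    nvec k r (t + 1) i = if (r t : ℕ) = i then 1 else nvec k r t i + 1 :=
  counter_succ r t i

lemma one_le_nvec (r : ℕ → Fin M) (t : ℕ) (i : Fin k) : 1 ≤ nvec k r t i :=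
  (mem_Icc.1 (counter_mem_Icc r t i)).1

lemma nvec_succ_eq_one_iff (r : ℕ → Fin M) (t : ℕ) (i : Fin k) :
    nvec k r (t + 1) i = 1 ↔ (r t : ℕ) = i := by
  have := one_le_nvec r t i
  rw [nvec_succ]
  split_ifs <;> omega

lemma nvec_succ_eq_iff {n : Fin k → ℕ} {ℓ : Fin k} (hℓ : n ℓ = 1) (r : ℕ → Fin M) (t : ℕ) :
    nvec k r (t + 1) = n ↔ (r t : ℕ) = ℓ ∧ ∀ i ≠ ℓ, nvec k r t i + 1 = n i := by
  have hother (hr : (r t : ℕ) = ℓ) (i : Fin k) (hi : i ≠ ℓ) :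
      nvec k r (t + 1) i = nvec k r t i + 1 := by
    rw [nvec_succ, if_neg fun h => hi (Fin.ext (h.symm.trans hr))]
  constructor
  · rintro rfl
    have hr := (nvec_succ_eq_one_iff r t ℓ).1 hℓ
    exact ⟨hr, fun i hi => (hother hr i hi).symm⟩
  · rintro ⟨hr, hn⟩
    funext i
    obtain rfl | hi := eq_or_ne i ℓ
    · rw [hℓ, nvec_succ_eq_one_iff, hr]
    · rw [hother hr i hi, hn i hi]

lemma nvec_succ_eq_and_nvec_eq_iff {n : Fin k → ℕ} {ℓ : Fin k} (hℓ : n ℓ = 1)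
    (r : ℕ → Fin M) (t m : ℕ) :
    nvec k r (t + 1) = n ∧ nvec k r t ℓ = m ↔
      (r t : ℕ) = ℓ ∧ nvec k r t = fun i => n i - 1 + if i = ℓ then m else 0 := by
  rw [nvec_succ_eq_iff hℓ, and_assoc]
  refine and_congr_right fun _ => ⟨fun ⟨hn, hm⟩ => funext fun i => ?_, fun h => ⟨?_, ?_⟩⟩
  · obtain rfl | hi := eq_or_ne i ℓ
    · simp [hℓ, hm]
    · simp [hi, ← hn i hi]
  · intro i hi
    have hpos := one_le_nvec r t i
    have hpred : nvec k r t i = n i - 1 := by simp [h, hi]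
    omega
  · simp [h, hℓ]

end Counter

section Path

variable {M t : ℕ}

lemma pad_last (r : Fin (t + 1) → Fin M) : pad r t = r (Fin.last t) :=
  congrArg r (Fin.ext (min_self t))

lemma pad_snoc_of_le (r : Fin (t + 1) → Fin M) (a : Fin M) {s : ℕ} (hs : s ≤ t) :
    pad (Fin.snoc r a : Fin (t + 2) → Fin M) s = pad r s := by
  have hidx : (⟨min s (t + 1), by omega⟩ : Fin (t + 2)) =
      Fin.castSucc ⟨min s t, by omega⟩ := by
    ext
    simp only [Fin.val_castSucc]
    omega
  simp only [pad, hidx, Fin.snoc_castSucc]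

lemma nvec_pad_snoc (k : ℕ) (r : Fin (t + 1) → Fin M) (a : Fin M) {s : ℕ} (hs : s ≤ t + 1) :
    nvec k (pad (Fin.snoc r a : Fin (t + 2) → Fin M)) s = nvec k (pad r) s :=
  funext fun i => counter_congr (fun _ hτ => pad_snoc_of_le r a (by omega)) i

variable {k : ℕ} (pi0 : Fin M → ℝ) (p : Fin M → Fin M → ℝ) (f0 : Fin M → ℝ)
  (f : ℕ → Fin M → (Fin k → ℕ) → ℝ)

lemma wpath_snoc (r : Fin (t + 1) → Fin M) (a : Fin M) :
    wpath k pi0 p f0 f (Fin.snoc r a : Fin (t + 2) → Fin M) =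
      wpath k pi0 p f0 f r * (p (r (Fin.last t)) a * f (t + 1) a (nvec k (pad r) (t + 1))) := by
  have hstart : (Fin.snoc r a : Fin (t + 2) → Fin M) 0 = r 0 := by
    rw [← Fin.castSucc_zero, Fin.snoc_castSucc]
  have hinit : ∀ s ∈ Icc 1 t,
      p (pad (Fin.snoc r a : Fin (t + 2) → Fin M) (s - 1)) (pad (Fin.snoc r a) s) *
          f s (pad (Fin.snoc r a) s) (nvec k (pad (Fin.snoc r a)) s) =
        p (pad r (s - 1)) (pad r s) * f s (pad r s) (nvec k (pad r) s) := fun s hs => by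
    have hst := (mem_Icc.1 hs).2
    rw [nvec_pad_snoc k r a (by omega), pad_snoc_of_le r a hst, pad_snoc_of_le r a (by omega)]
  unfold wpath
  rw [prod_Icc_succ_top (by omega), prod_congr rfl hinit, hstart, nvec_pad_snoc k r a le_rfl,
    Nat.add_sub_cancel, pad_snoc_of_le r a le_rfl, pad_last, pad_last, Fin.snoc_last, ← mul_assoc]

lemma alpha_succ (t : ℕ) (n : Fin k → ℕ) (j : Fin M) :
    alpha k pi0 p f0 f (t + 1) n j =
      ∑ r : Fin (t + 1) → Fin M with nvec k (pad r) (t + 1) = n,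
        wpath k pi0 p f0 f r * (p (r (Fin.last t)) j * f (t + 1) j n) := by
  symm
  refine sum_nbij' (fun r => Fin.snoc r j) Fin.init ?_ ?_ ?_ ?_ ?_
  · intro r hr
    simpa [nvec_pad_snoc] using hr
  · intro r hr
    obtain ⟨rfl, hn⟩ := (mem_filter.1 hr).2
    rw [← Fin.snoc_init_self r, nvec_pad_snoc k _ _ le_rfl] at hn
    simpa using hn
  · intro r _
    exact Fin.init_snoc _ _
  · intro r hr
    obtain ⟨rfl, -⟩ := (mem_filter.1 hr).2
    exact Fin.snoc_init_self r
  · intro r hr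
    rw [wpath_snoc, (mem_filter.1 hr).2]

end Path

end MRS

open MRS in
/-- The truncation in `n i - 1` is harmless: counters are positive, so both sides vanish when some
`n i` is `0`. -/
theorem forward_recursion_reset_general {M k : ℕ} (hkM : k ≤ M)
    (pi0 : Fin M → ℝ) (p : Fin M → Fin M → ℝ) (f0 : Fin M → ℝ)
    (f : ℕ → Fin M → (Fin k → ℕ) → ℝ) (t : ℕ) (j : Fin M)
    {n : Fin k → ℕ} {ℓ : Fin k} (hℓ : n ℓ = 1) :
    alpha k pi0 p f0 f (t + 1) n j
      = f (t + 1) j n * p (Fin.castLE hkM ℓ) j *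
          ∑ m ∈ Icc 1 (t + 1),
            alpha k pi0 p f0 f t (fun i => n i - 1 + if i = ℓ then m else 0)
              (Fin.castLE hkM ℓ) := by
  have hfiber (m : ℕ) (r : Fin (t + 1) → Fin M) :
      nvec k (pad r) (t + 1) = n ∧ nvec k (pad r) t ℓ = m ↔
        r (Fin.last t) = Fin.castLE hkM ℓ ∧
          nvec k (pad r) t = fun i => n i - 1 + if i = ℓ then m else 0 := by
    rw [nvec_succ_eq_and_nvec_eq_iff hℓ, pad_last, Fin.ext_iff, Fin.val_castLE]
  rw [alpha_succ, mul_sum, ← sum_fiberwise_of_maps_to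
    (g := fun r => nvec k (pad r) t ℓ) fun r _ => counter_mem_Icc (pad r) t ℓ]
  refine sum_congr rfl fun m _ => ?_
  simp only [alpha, filter_filter, hfiber, mul_sum]
  refine sum_congr rfl fun r hr => ?_
  rw [(mem_filter.1 hr).2.1]
  ring

open MRS in
/-- Forward recursion when the counter of the AR regime `ℓ` equals `1`:
`α^(t)_n(j) = f_t(j,n) · p_{ℓj} · ∑_{m=1}^t α^(t-1)_{n - 1 + m·e_ℓ}(ℓ)`. -/
theorem forward_recursion_reset (M k T : ℕ) (hM : 2 ≤ M) (hk : 1 ≤ k) (hkM : k < M)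
    (hT : 1 ≤ T)
    (pi0 : Fin M → ℝ) (p : Fin M → Fin M → ℝ) (f0 : Fin M → ℝ)
    (f : ℕ → Fin M → (Fin k → ℕ) → ℝ)
    (hpi : ∀ i, 0 ≤ pi0 i) (hpisum : ∑ i, pi0 i = 1)
    (hp : ∀ i j, 0 ≤ p i j) (hprow : ∀ i, ∑ j, p i j = 1)
    (hf0 : ∀ i, 0 ≤ f0 i) (hf : ∀ t j n, 0 ≤ f t j n)
    (t : ℕ) (ht1 : 1 ≤ t) (htT : t ≤ T) (j : Fin M)
    (n : Fin k → ℕ) (hn : n ∈ Sset k t) (ℓ : Fin k) (hℓ : n ℓ = 1) :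
    alpha k pi0 p f0 f t n j
      = f t j n * p (Fin.castLE hkM.le ℓ) j *
          ∑ m ∈ Finset.Icc 1 t,
            alpha k pi0 p f0 f (t - 1) (fun i => n i - 1 + if i = ℓ then m else 0)
              (Fin.castLE hkM.le ℓ) := by
  obtain ⟨u, rfl⟩ := Nat.exists_eq_add_of_le' ht1
  exact forward_recursion_reset_general hkM.le pi0 p f0 f u j hℓ
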